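/- Let f : ℝ → ℂ be locally integrable and j ≥ 0. Then for every x ∈ ℝ, Σ_{μ ∈ ℤ} 2^j (∫_ℝ f(y) h_{j,μ}(y) dy) h_{j,μ}(x) = 𝔼_{j+1} f(x) − 𝔼_j f(x), where for each fixed x at most one term of the sum on the left is nonzero. -/

import Mathlib

open MeasureTheory

/-- The Haar function `h_{j,μ}(x) = h(2^j x - μ)` on `ℝ`, where
`h = 1_{[0,1/2)} - 1_{[1/2,1)}`. -/
noncomputable def haarR (j : ℕ) (μ : ℤ) : ℝ → ℝ := fun x =>
  Set.indicator (Set.Ico (0 : ℝ) (1 / 2)) (fun _ => (1 : ℝ)) ((2:ℝ) ^ j * x - μ)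
  - Set.indicator (Set.Ico (1 / 2 : ℝ) 1) (fun _ => (1 : ℝ)) ((2:ℝ) ^ j * x - μ)

/-- The conditional expectation
`𝔼_j f x = Σ_{μ∈ℤ} 1_{I_{j,μ}}(x) · 2^j ∫_{I_{j,μ}} f(y) dy` associated with the
dyadic intervals `I_{j,μ} = [μ 2^{-j}, (μ+1) 2^{-j})`. -/
noncomputable def dyadicExp (j : ℕ) (f : ℝ → ℂ) (x : ℝ) : ℂ :=
  ∑' μ : ℤ, Set.indicator
    (Set.Ico ((μ : ℝ) * ((2:ℝ) ^ j)⁻¹) (((μ : ℝ) + 1) * ((2:ℝ) ^ j)⁻¹))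
    (fun _ => (2 ^ j : ℂ) *
      ∫ y in Set.Ico ((μ : ℝ) * ((2:ℝ) ^ j)⁻¹) (((μ : ℝ) + 1) * ((2:ℝ) ^ j)⁻¹), f y) x

/-!
Fix `x`, and let `I_{j,μ}` be the dyadic interval of generation `j` containing it. Every other
`h_{j,ν}` vanishes at `x`, while `h_{j,μ}` is the difference of the indicators of the left and right
halves of `I_{j,μ}`. With `a` and `b` the integrals of `f` over these halves, the surviving term is
`±2^j (a - b)`, the sign depending on the half containing `x`, and this is the jump of the averages:
`2^(j+1) a - 2^j (a + b) = 2^j (a - b)` and `2^(j+1) b - 2^j (a + b) = -2^j (a - b)`.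
-/

/-- The dyadic interval `I_{j,μ} = [μ 2^{-j}, (μ+1) 2^{-j})` of generation `j`, with its endpoints
written as in `dyadicExp`. -/
def dyadicInterval (j : ℕ) (μ : ℤ) : Set ℝ :=
  Set.Ico ((μ : ℝ) * ((2 : ℝ) ^ j)⁻¹) (((μ : ℝ) + 1) * ((2 : ℝ) ^ j)⁻¹)

section DyadicInterval

variable {j : ℕ} {μ : ℤ} {x : ℝ}

lemma mem_dyadicInterval_iff_floor_eq : x ∈ dyadicInterval j μ ↔ ⌊(2 : ℝ) ^ j * x⌋ = μ := by
  have hpow : (0 : ℝ) < 2 ^ j := by positivity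
  rw [dyadicInterval, Set.mem_Ico, Int.floor_eq_iff, ← div_eq_mul_inv, ← div_eq_mul_inv,
    div_le_iff₀ hpow, lt_div_iff₀ hpow, mul_comm x]

lemma mem_dyadicInterval_floor (j : ℕ) (x : ℝ) : x ∈ dyadicInterval j ⌊(2 : ℝ) ^ j * x⌋ :=
  mem_dyadicInterval_iff_floor_eq.2 rfl

lemma pairwise_disjoint_dyadicInterval (j : ℕ) :
    Pairwise (Function.onFun Disjoint (dyadicInterval j)) := fun _ _ hne =>
  Set.disjoint_left.2 fun _ hμ hν =>
    hne ((mem_dyadicInterval_iff_floor_eq.1 hμ).symm.trans (mem_dyadicInterval_iff_floor_eq.1 hν))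

lemma disjoint_dyadicInterval_halves (j : ℕ) (μ : ℤ) :
    Disjoint (dyadicInterval (j + 1) (2 * μ)) (dyadicInterval (j + 1) (2 * μ + 1)) :=
  pairwise_disjoint_dyadicInterval (j + 1) (by omega)

lemma measurableSet_dyadicInterval (j : ℕ) (μ : ℤ) : MeasurableSet (dyadicInterval j μ) :=
  measurableSet_Ico

lemma mem_dyadicInterval_left_half_iff :
    x ∈ dyadicInterval (j + 1) (2 * μ) ↔ (2 : ℝ) ^ j * x - μ ∈ Set.Ico (0 : ℝ) (1 / 2) := by
  rw [mem_dyadicInterval_iff_floor_eq, Int.floor_eq_iff, Set.mem_Ico, pow_succ]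
  push_cast
  constructor <;> rintro ⟨hle, hlt⟩ <;> constructor <;> linarith

lemma mem_dyadicInterval_right_half_iff :
    x ∈ dyadicInterval (j + 1) (2 * μ + 1) ↔ (2 : ℝ) ^ j * x - μ ∈ Set.Ico (1 / 2 : ℝ) 1 := by
  rw [mem_dyadicInterval_iff_floor_eq, Int.floor_eq_iff, Set.mem_Ico, pow_succ]
  push_cast
  constructor <;> rintro ⟨hle, hlt⟩ <;> constructor <;> linarith

lemma dyadicInterval_eq_union_halves (j : ℕ) (μ : ℤ) :
    dyadicInterval j μ = dyadicInterval (j + 1) (2 * μ) ∪ dyadicInterval (j + 1) (2 * μ + 1) := by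
  ext x
  rw [Set.mem_union, mem_dyadicInterval_left_half_iff, mem_dyadicInterval_right_half_iff,
    ← Set.mem_union, Set.Ico_union_Ico_eq_Ico (by norm_num) (by norm_num),
    mem_dyadicInterval_iff_floor_eq, Int.floor_eq_iff, Set.mem_Ico, sub_nonneg, sub_lt_iff_lt_add']

lemma integrableOn_dyadicInterval {E : Type*} [NormedAddCommGroup E] {ν : Measure ℝ} {f : ℝ → E}
    (hf : LocallyIntegrable f ν) (j : ℕ) (μ : ℤ) : IntegrableOn f (dyadicInterval j μ) ν :=
  (hf.integrableOn_isCompact isCompact_Icc).mono_set Set.Ico_subset_Icc_self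

end DyadicInterval

section Haar

variable {j : ℕ} {μ : ℤ} {x : ℝ}

lemma haarR_eq_indicator_sub_indicator (j : ℕ) (μ : ℤ) :
    haarR j μ = (dyadicInterval (j + 1) (2 * μ)).indicator 1
      - (dyadicInterval (j + 1) (2 * μ + 1)).indicator 1 := by
  classical
  ext x
  simp only [haarR, Pi.sub_apply, Set.indicator_apply, mem_dyadicInterval_left_half_iff,
    mem_dyadicInterval_right_half_iff, Pi.one_apply]

lemma haarR_of_mem_left_half (hx : x ∈ dyadicInterval (j + 1) (2 * μ)) : haarR j μ x = 1 := by
  have hx' := Set.disjoint_left.1 (disjoint_dyadicInterval_halves j μ) hx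
  simp [haarR_eq_indicator_sub_indicator, hx, hx']

lemma haarR_of_mem_right_half (hx : x ∈ dyadicInterval (j + 1) (2 * μ + 1)) :
    haarR j μ x = -1 := by
  have hx' := Set.disjoint_right.1 (disjoint_dyadicInterval_halves j μ) hx
  simp [haarR_eq_indicator_sub_indicator, hx, hx']

lemma haarR_of_notMem (hx : x ∉ dyadicInterval j μ) : haarR j μ x = 0 := by
  rw [dyadicInterval_eq_union_halves, Set.mem_union, not_or] at hx
  simp [haarR_eq_indicator_sub_indicator, hx]

lemma mem_dyadicInterval_of_haarR_ne_zero (h : haarR j μ x ≠ 0) : x ∈ dyadicInterval j μ :=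
  not_imp_comm.1 haarR_of_notMem h

lemma subsingleton_setOf_haarR_ne_zero (j : ℕ) (x : ℝ) :
    {μ : ℤ | haarR j μ x ≠ 0}.Subsingleton := fun _ hμ _ hν =>
  (pairwise_disjoint_dyadicInterval j).eq <| Set.not_disjoint_iff.2
    ⟨x, mem_dyadicInterval_of_haarR_ne_zero hμ, mem_dyadicInterval_of_haarR_ne_zero hν⟩

variable {E : Type*} [NormedAddCommGroup E] [NormedSpace ℝ E] {ν : Measure ℝ} {f : ℝ → E}

lemma setIntegral_dyadicInterval_eq_add (hf : IntegrableOn f (dyadicInterval j μ) ν) :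
    ∫ y in dyadicInterval j μ, f y ∂ν = (∫ y in dyadicInterval (j + 1) (2 * μ), f y ∂ν)
      + ∫ y in dyadicInterval (j + 1) (2 * μ + 1), f y ∂ν := by
  rw [dyadicInterval_eq_union_halves] at hf ⊢
  exact setIntegral_union (disjoint_dyadicInterval_halves j μ) (measurableSet_dyadicInterval _ _)
    hf.left_of_union hf.right_of_union

lemma integral_haarR_smul (hf : IntegrableOn f (dyadicInterval j μ) ν) :
    ∫ y, haarR j μ y • f y ∂ν = (∫ y in dyadicInterval (j + 1) (2 * μ), f y ∂ν)
      - ∫ y in dyadicInterval (j + 1) (2 * μ + 1), f y ∂ν := by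
  have hleft := measurableSet_dyadicInterval (j + 1) (2 * μ)
  have hright := measurableSet_dyadicInterval (j + 1) (2 * μ + 1)
  rw [dyadicInterval_eq_union_halves] at hf
  rw [← integral_indicator hleft, ← integral_indicator hright,
    ← integral_sub (hf.left_of_union.integrable_indicator hleft)
      (hf.right_of_union.integrable_indicator hright)]
  simp only [haarR_eq_indicator_sub_indicator, Pi.sub_apply, sub_smul,
    ← Set.indicator_smul_apply_left, Pi.one_apply, one_smul]

end Haar

lemma dyadicExp_of_mem {j : ℕ} {μ : ℤ} {x : ℝ} (f : ℝ → ℂ) (hx : x ∈ dyadicInterval j μ) :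
    dyadicExp j f x = (2 ^ j : ℂ) * ∫ y in dyadicInterval j μ, f y := by
  have hvanish (ν : ℤ) (hν : ν ≠ μ) : x ∉ dyadicInterval j ν :=
    Set.disjoint_right.1 (pairwise_disjoint_dyadicInterval j hν) hx
  exact (tsum_eq_single μ fun ν hν => Set.indicator_of_notMem (hvanish ν hν) _).trans
    (Set.indicator_of_mem hx _)

lemma two_pow_mul_integral_haarR_mul_haarR {j : ℕ} {μ : ℤ} {x : ℝ} {f : ℝ → ℂ}
    (hf : IntegrableOn f (dyadicInterval j μ)) (hx : x ∈ dyadicInterval j μ) :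
    (2 ^ j : ℂ) * (∫ y, haarR j μ y • f y) * ((haarR j μ x : ℝ) : ℂ)
      = dyadicExp (j + 1) f x - dyadicExp j f x := by
  rw [integral_haarR_smul hf, dyadicExp_of_mem f hx, setIntegral_dyadicInterval_eq_add hf]
  rw [dyadicInterval_eq_union_halves] at hx
  rcases hx with hleft | hright
  · rw [haarR_of_mem_left_half hleft, dyadicExp_of_mem f hleft]
    push_cast
    ring
  · rw [haarR_of_mem_right_half hright, dyadicExp_of_mem f hright]
    push_cast
    ring

/-- For locally integrable `f : ℝ → ℂ`, `j ≥ 0` and every `x ∈ ℝ`,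
`Σ_{μ∈ℤ} 2^j (∫ f h_{j,μ}) h_{j,μ}(x) = 𝔼_{j+1} f(x) - 𝔼_j f(x)`, where for each
fixed `x` at most one term of the sum is nonzero. -/
theorem haar_stmt15 (f : ℝ → ℂ) (hf : LocallyIntegrable f) (j : ℕ) :
    ∀ x : ℝ,
      (∑' μ : ℤ, (2 ^ j : ℂ) * (∫ y, haarR j μ y • f y) * ((haarR j μ x : ℝ) : ℂ))
          = dyadicExp (j + 1) f x - dyadicExp j f x ∧
      {μ : ℤ | (2 ^ j : ℂ) * (∫ y, haarR j μ y • f y) * ((haarR j μ x : ℝ) : ℂ)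
          ≠ 0}.Subsingleton := by
  intro x
  constructor
  · have hzero (μ : ℤ) (hμ : μ ≠ ⌊(2 : ℝ) ^ j * x⌋) : haarR j μ x = 0 :=
      haarR_of_notMem fun hx => hμ (mem_dyadicInterval_iff_floor_eq.1 hx).symm
    rw [tsum_eq_single _ fun μ hμ => by rw [hzero μ hμ, Complex.ofReal_zero, mul_zero]]
    exact two_pow_mul_integral_haarR_mul_haarR (integrableOn_dyadicInterval hf j _)
      (mem_dyadicInterval_floor j x)
  · exact (subsingleton_setOf_haarR_ne_zero j x).anti fun _ hμ =>
      Complex.ofReal_ne_zero.1 (right_ne_zero_of_mul hμ)
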